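/- M(G,Y) is an E-unitary inverse monoid: the multiplication ((A,g),(B,h)) ↦ (A ∪ gB, gh) is well defined (A ∪ gB ∈ 𝒳_Y and gh ∈ V(A ∪ gB)) and associative; (Γ_1, 1) is a two-sided identity; every s = (A,g) satisfies s s⁻¹ s = s and s⁻¹ s s⁻¹ = s⁻¹, where s⁻¹ := (g⁻¹A, g⁻¹) ∈ M(G,Y); idempotents commute; the natural partial order satisfies (A,g) ≤ (B,h) iff g = h and B ⊆ A; two elements (A,g) and (B,h) are σ-related iff g = h; and M(G,Y) is E-unitary. -/

import Mathlib

namespace FInvPaper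

/-- The extended alphabet `Y = X ⊔ Ḡ`, with `Ḡ` a bijective copy of `G`. -/
abbrev YT (X G : Type*) := X ⊕ G

/-- The extension `ι_Y : Y → G` of the assignment map `ι : X → G`. -/
def iotaY {X G : Type*} (ι : X → G) : YT X G → G := Sum.elim ι id

/-- A (candidate) subgraph of `Cay(G,Y)`: a set of vertices together with a set
of positive edges, an edge `(a, y)` joining `a` to `a * ι_Y y`. -/
abbrev Graph (X G : Type*) := Set G × Set (G × YT X G)

variable {X G : Type*} [Group G]

/-- `Γ` is a finite subgraph of `Cay(G,Y)` containing the origin. -/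
def IsSubgraph (ι : X → G) (Γ : Graph X G) : Prop :=
  Γ.1.Finite ∧ Γ.2.Finite ∧ (1 : G) ∈ Γ.1 ∧
    ∀ e ∈ Γ.2, e.1 ∈ Γ.1 ∧ e.1 * iotaY ι e.2 ∈ Γ.1

/-- The relation on vertices given by the positive edges of `Γ`. -/
def edgeRel (ι : X → G) (Γ : Graph X G) (a b : G) : Prop :=
  ∃ y : YT X G, (a, y) ∈ Γ.2 ∧ b = a * iotaY ι y

/-- `Γ` is connected: every vertex is related to the origin `1` by the
equivalence relation generated by the edge relation. -/
def IsConn (ι : X → G) (Γ : Graph X G) : Prop :=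
  ∀ v ∈ Γ.1, Relation.EqvGen (edgeRel ι Γ) 1 v

/-- `𝒳_Y`: all finite connected subgraphs of `Cay(G,Y)` containing the origin. -/
def XY (ι : X → G) : Set (Graph X G) :=
  {Γ | IsSubgraph ι Γ ∧ IsConn ι Γ}

/-- The translate `gΓ`. -/
def gmul (g : G) (Γ : Graph X G) : Graph X G :=
  ((g * ·) '' Γ.1, (fun e => (g * e.1, e.2)) '' Γ.2)

/-- Componentwise union of graphs. -/
def gunion (Γ Δ : Graph X G) : Graph X G := (Γ.1 ∪ Δ.1, Γ.2 ∪ Δ.2)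

/-- Componentwise inclusion of graphs. -/
def gsub (Γ Δ : Graph X G) : Prop := Γ.1 ⊆ Δ.1 ∧ Γ.2 ⊆ Δ.2

/-- The closure `Γ^∧` of `Γ`: add the edge `(a, \overline{a⁻¹b})` for all
vertices `a, b` of `Γ`. -/
def clo (Γ : Graph X G) : Graph X G :=
  (Γ.1, Γ.2 ∪ {e : G × YT X G | ∃ a ∈ Γ.1, ∃ b ∈ Γ.1, e = (a, Sum.inr (a⁻¹ * b))})

/-- `Γ` is closed. -/
def IsClosedGr (Γ : Graph X G) : Prop :=
  ∀ a ∈ Γ.1, ∀ b ∈ Γ.1, (a, (Sum.inr (a⁻¹ * b) : YT X G)) ∈ Γ.2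

/-- `𝒳_Y^∧`: all closed graphs in `𝒳_Y`. -/
def XYw (ι : X → G) : Set (Graph X G) := {Γ | Γ ∈ XY ι ∧ IsClosedGr Γ}

/-- The graph `Γ_1` with single vertex `1` and no edges. -/
def gammaOne : Graph X G := ({1}, ∅)

/-- The graph `Γ_x` for `x ∈ X`. -/
def gammaX (ι : X → G) (x : X) : Graph X G :=
  ({1, ι x}, {((1 : G), (Sum.inl x : YT X G))})

/-- The graph `Γ_ḡ` for `g ∈ G`. -/
def gammaBar (g : G) : Graph X G :=
  ({1, g}, {((1 : G), (Sum.inr g : YT X G))})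

/-- Raw elements: pairs `(Γ, g)`. -/
abbrev Elt (X G : Type*) := Graph X G × G

/-- The carrier of `M(G,Y)`. -/
def Mset (ι : X → G) : Set (Elt X G) := {p | p.1 ∈ XY ι ∧ p.2 ∈ p.1.1}

/-- Multiplication of `M(G,Y)`: `(A,g)(B,h) = (A ∪ gB, gh)`. -/
def mulM (p q : Elt X G) : Elt X G := (gunion p.1 (gmul p.2 q.1), p.2 * q.2)

/-- Inversion: `(A,g)⁻¹ = (g⁻¹A, g⁻¹)`. -/
def invM (p : Elt X G) : Elt X G := (gmul p.2⁻¹ p.1, p.2⁻¹)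

/-- The carrier of `M^∧(G,Y)`. -/
def Mwedge (ι : X → G) : Set (Elt X G) := {p | p.1 ∈ XYw ι ∧ p.2 ∈ p.1.1}

/-- Multiplication of `M^∧(G,Y)`: `(A,g)(B,h) = ((A ∪ gB)^∧, gh)`. -/
def mulW (p q : Elt X G) : Elt X G := (clo (gunion p.1 (gmul p.2 q.1)), p.2 * q.2)

/-- Natural partial order of `M^∧(G,Y)`: `s ≤ t` iff `s = s s⁻¹ t`. -/
def nleW (p q : Elt X G) : Prop := p = mulW (mulW p (invM p)) q

/-- Minimum group congruence `σ` of `M^∧(G,Y)`. -/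
def sigmaW (ι : X → G) (p q : Elt X G) : Prop :=
  ∃ u ∈ Mwedge ι, nleW u p ∧ nleW u q

/-- The `m`-operation of `M^∧(G,Y)`: `m(A, g) = (Γ_ḡ^∧, g)`. -/
def mW (p : Elt X G) : Elt X G := (clo (gammaBar p.2), p.2)

/-- Natural partial order of `M(G,Y)`. -/
def nleM (p q : Elt X G) : Prop := p = mulM (mulM p (invM p)) q

/-- Minimum group congruence `σ` of `M(G,Y)`. -/
def sigmaM (ι : X → G) (p q : Elt X G) : Prop :=
  ∃ u ∈ Mset ι, nleM u p ∧ nleM u q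

end FInvPaper

/-!
An element `(A, g)` is a finite connected graph with two distinguished vertices, `1` and `g`.
The set `𝒳_Y` is closed under unions, since both graphs contain `1`, and under the translations
`Γ ↦ g⁻¹Γ` with `g ∈ V(Γ)`, which only move the base point. Products stay in `M(G,Y)` because
`A ∪ gB = g(g⁻¹A ∪ B)` arises from these two operations.

Algebraically, `M(G,Y)` sits inside the semidirect product of the semilattice of graphs with `G`.
There `(A, g)(A, g)⁻¹ = (A, 1)`, so the idempotents are the pairs `(A, 1)` and `p ≤ q` says that
`p = (A ∪ B, h)`, where `p = (A, g)` and `q = (B, h)`.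
-/

namespace FInvPaper

section Semilattice

variable {X G : Type*}

lemma gunion_eq_sup (A B : Graph X G) : gunion A B = A ⊔ B := rfl

lemma gsub_iff_le (A B : Graph X G) : gsub A B ↔ A ≤ B := Iff.rfl

end Semilattice

section Translation

variable {X G : Type*} [Group G]

lemma one_gmul (A : Graph X G) : gmul 1 A = A := by
  simp [gmul]

lemma gmul_gmul (g h : G) (A : Graph X G) : gmul g (gmul h A) = gmul (g * h) A := by
  simp only [gmul, Set.image_image, mul_assoc]

lemma gmul_sup (g : G) (A B : Graph X G) : gmul g (A ⊔ B) = gmul g A ⊔ gmul g B :=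
  Prod.ext (Set.image_union ..) (Set.image_union ..)

lemma mul_mem_gmul {g a : G} {A : Graph X G} (ha : a ∈ A.1) : g * a ∈ (gmul g A).1 :=
  Set.mem_image_of_mem _ ha

lemma mem_gmul_of_one_mem {g : G} {A : Graph X G} (h : 1 ∈ A.1) : g ∈ (gmul g A).1 := by
  simpa using mul_mem_gmul (g := g) h

lemma sup_gmul_eq_gmul_sup (g : G) (A B : Graph X G) :
    A ⊔ gmul g B = gmul g (gmul g⁻¹ A ⊔ B) := by
  rw [gmul_sup, gmul_gmul, mul_inv_cancel, one_gmul]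

end Translation

section Connected

variable {X G : Type*} [Group G] {ι : X → G} {A B : Graph X G} {g : G}

lemma edgeRel_mono (h : A ≤ B) {a b : G} (hab : edgeRel ι A a b) : edgeRel ι B a b :=
  let ⟨y, hy, hb⟩ := hab
  ⟨y, h.2 hy, hb⟩

lemma edgeRel_gmul (g : G) {a b : G} (hab : edgeRel ι A a b) :
    edgeRel ι (gmul g A) (g * a) (g * b) := by
  obtain ⟨y, hy, rfl⟩ := hab
  exact ⟨y, Set.mem_image_of_mem _ hy, (mul_assoc g a _).symm⟩

lemma eqvGen_edgeRel_gmul (g : G) {a b : G} (hab : Relation.EqvGen (edgeRel ι A) a b) :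
    Relation.EqvGen (edgeRel ι (gmul g A)) (g * a) (g * b) := by
  induction hab with
  | rel a b hab => exact .rel _ _ (edgeRel_gmul g hab)
  | refl a => exact .refl _
  | symm a b _ ih => exact .symm _ _ ih
  | trans a b c _ _ ihab ihbc => exact .trans _ _ _ ihab ihbc

lemma IsSubgraph.sup (hA : IsSubgraph ι A) (hB : IsSubgraph ι B) : IsSubgraph ι (A ⊔ B) := by
  obtain ⟨hAV, hAE, hA1, hAends⟩ := hA
  obtain ⟨hBV, hBE, -, hBends⟩ := hB
  refine ⟨hAV.union hBV, hAE.union hBE, .inl hA1, ?_⟩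
  rintro e (he | he)
  · exact (hAends e he).imp .inl .inl
  · exact (hBends e he).imp .inr .inr

lemma IsSubgraph.gmul_inv (hA : IsSubgraph ι A) (hg : g ∈ A.1) :
    IsSubgraph ι (gmul g⁻¹ A) := by
  obtain ⟨hV, hE, -, hends⟩ := hA
  refine ⟨hV.image _, hE.image _, ⟨g, hg, inv_mul_cancel g⟩, ?_⟩
  rintro _ ⟨e, he, rfl⟩
  obtain ⟨hsource, htarget⟩ := hends e he
  exact ⟨mul_mem_gmul hsource, by simpa only [mul_assoc] using mul_mem_gmul htarget⟩

lemma IsConn.sup (hA : IsConn ι A) (hB : IsConn ι B) : IsConn ι (A ⊔ B) := by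
  rintro v (hv | hv)
  · exact (hA v hv).mono fun _ _ ↦ edgeRel_mono le_sup_left
  · exact (hB v hv).mono fun _ _ ↦ edgeRel_mono le_sup_right

lemma IsConn.gmul_inv (hA : IsConn ι A) (hg : g ∈ A.1) : IsConn ι (gmul g⁻¹ A) := by
  rintro _ ⟨v, hv, rfl⟩
  have hgv : Relation.EqvGen (edgeRel ι A) g v := .trans _ _ _ (.symm _ _ (hA g hg)) (hA v hv)
  simpa only [inv_mul_cancel] using eqvGen_edgeRel_gmul g⁻¹ hgv

lemma one_mem_of_mem_XY (hA : A ∈ XY ι) : 1 ∈ A.1 :=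
  hA.1.2.2.1

lemma sup_mem_XY (hA : A ∈ XY ι) (hB : B ∈ XY ι) : A ⊔ B ∈ XY ι :=
  ⟨hA.1.sup hB.1, hA.2.sup hB.2⟩

lemma gmul_inv_mem_XY (hA : A ∈ XY ι) (hg : g ∈ A.1) : gmul g⁻¹ A ∈ XY ι :=
  ⟨hA.1.gmul_inv hg, hA.2.gmul_inv hg⟩

lemma sup_gmul_mem_XY (hA : A ∈ XY ι) (hg : g ∈ A.1) (hB : B ∈ XY ι) :
    A ⊔ gmul g B ∈ XY ι := by
  have hsup : gmul g⁻¹ A ⊔ B ∈ XY ι := sup_mem_XY (gmul_inv_mem_XY hA hg) hB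
  have hg_inv : g⁻¹ ∈ (gmul g⁻¹ A ⊔ B).1 := .inl (mem_gmul_of_one_mem (one_mem_of_mem_XY hA))
  simpa only [sup_gmul_eq_gmul_sup, inv_inv] using gmul_inv_mem_XY hsup hg_inv

end Connected

section Multiplication

variable {X G : Type*} [Group G]

lemma mulM_eq (p q : Elt X G) : mulM p q = (p.1 ⊔ gmul p.2 q.1, p.2 * q.2) := by
  rw [mulM, gunion_eq_sup]

lemma mulM_assoc (p q r : Elt X G) : mulM (mulM p q) r = mulM p (mulM q r) := by
  simp only [mulM_eq, gmul_sup, gmul_gmul, sup_assoc, mul_assoc]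

lemma mk_one_mulM (A : Graph X G) (p : Elt X G) : mulM (A, 1) p = (A ⊔ p.1, p.2) := by
  simp only [mulM_eq, one_gmul, one_mul]

lemma gammaOne_le_iff {A : Graph X G} : gammaOne ≤ A ↔ 1 ∈ A.1 := by
  simp [gammaOne, Prod.le_def]

lemma gmul_gammaOne_le_iff {g : G} {A : Graph X G} : gmul g gammaOne ≤ A ↔ g ∈ A.1 := by
  simp [gammaOne, gmul, Prod.le_def]

lemma gammaOne_mulM {p : Elt X G} (h : 1 ∈ p.1.1) : mulM (gammaOne, 1) p = p := by
  rw [mk_one_mulM, sup_of_le_right (gammaOne_le_iff.2 h)]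

lemma mulM_gammaOne {p : Elt X G} (h : p.2 ∈ p.1.1) : mulM p (gammaOne, 1) = p := by
  rw [mulM_eq, sup_of_le_left (gmul_gammaOne_le_iff.2 h), mul_one]

lemma invM_invM (p : Elt X G) : invM (invM p) = p := by
  simp only [invM, gmul_gmul, inv_inv, mul_inv_cancel, one_gmul]

lemma mulM_invM (p : Elt X G) : mulM p (invM p) = (p.1, 1) := by
  simp only [mulM_eq, invM, gmul_gmul, mul_inv_cancel, one_gmul, sup_idem]

lemma mulM_invM_mulM (p : Elt X G) : mulM (mulM p (invM p)) p = p := by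
  rw [mulM_invM, mk_one_mulM, sup_idem]

lemma invM_mulM_invM (p : Elt X G) : mulM (mulM (invM p) p) (invM p) = invM p := by
  simpa only [invM_invM] using mulM_invM_mulM (invM p)

lemma mulM_self_eq_iff {p : Elt X G} : mulM p p = p ↔ p.2 = 1 := by
  refine ⟨fun h ↦ mul_eq_left.1 (congrArg Prod.snd h), fun h ↦ ?_⟩
  obtain ⟨A, g⟩ := p
  obtain rfl : g = 1 := h
  rw [mk_one_mulM, sup_idem]

lemma mulM_comm_of_idempotent {p q : Elt X G} (hp : mulM p p = p) (hq : mulM q q = q) :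
    mulM p q = mulM q p := by
  rw [mulM_self_eq_iff] at hp hq
  simp only [mulM_eq, hp, hq, one_gmul, sup_comm]

lemma nleM_iff (p q : Elt X G) : nleM p q ↔ p.2 = q.2 ∧ gsub q.1 p.1 := by
  rw [nleM, mulM_invM, mk_one_mulM, Prod.ext_iff, gsub_iff_le, and_comm, left_eq_sup]

lemma mulM_self_of_nleM {p q : Elt X G} (hp : mulM p p = p) (hpq : nleM p q) :
    mulM q q = q := by
  rw [mulM_self_eq_iff] at hp ⊢
  exact ((nleM_iff p q).1 hpq).1.symm.trans hp

end Multiplication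

section Carrier

variable {X G : Type*} [Group G] {ι : X → G} {p q : Elt X G}

lemma mulM_mem_Mset (hp : p ∈ Mset ι) (hq : q ∈ Mset ι) : mulM p q ∈ Mset ι :=
  ⟨sup_gmul_mem_XY hp.1 hp.2 hq.1, .inr (mul_mem_gmul hq.2)⟩

lemma invM_mem_Mset (hp : p ∈ Mset ι) : invM p ∈ Mset ι :=
  ⟨gmul_inv_mem_XY hp.1 hp.2, mem_gmul_of_one_mem (one_mem_of_mem_XY hp.1)⟩

lemma sigmaM_iff (hp : p ∈ Mset ι) (hq : q ∈ Mset ι) : sigmaM ι p q ↔ p.2 = q.2 := by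
  simp only [sigmaM, nleM_iff, gsub_iff_le]
  constructor
  · rintro ⟨u, -, ⟨hup, -⟩, ⟨huq, -⟩⟩
    exact hup.symm.trans huq
  · intro hpq
    exact ⟨(p.1 ⊔ q.1, p.2), ⟨sup_mem_XY hp.1 hq.1, .inl hp.2⟩, ⟨rfl, le_sup_left⟩,
      ⟨hpq, le_sup_right⟩⟩

end Carrier

theorem MGY_EUnitary_inverseMonoid_general {X G : Type*} [Group G] (ι : X → G) :
    (∀ p q : Elt X G, p ∈ Mset ι → q ∈ Mset ι →
      (mulM p q).1 ∈ XY ι ∧ (mulM p q).2 ∈ (mulM p q).1.1) ∧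
    (∀ p q r : Elt X G, p ∈ Mset ι → q ∈ Mset ι → r ∈ Mset ι →
      mulM (mulM p q) r = mulM p (mulM q r)) ∧
    (∀ p : Elt X G, p ∈ Mset ι →
      mulM ((gammaOne, 1) : Elt X G) p = p ∧ mulM p ((gammaOne, 1) : Elt X G) = p) ∧
    (∀ p : Elt X G, p ∈ Mset ι → invM p ∈ Mset ι ∧
      mulM (mulM p (invM p)) p = p ∧ mulM (mulM (invM p) p) (invM p) = invM p) ∧
    (∀ p q : Elt X G, p ∈ Mset ι → q ∈ Mset ι →
      mulM p p = p → mulM q q = q → mulM p q = mulM q p) ∧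
    (∀ p q : Elt X G, p ∈ Mset ι → q ∈ Mset ι →
      (nleM p q ↔ p.2 = q.2 ∧ gsub q.1 p.1)) ∧
    (∀ p q : Elt X G, p ∈ Mset ι → q ∈ Mset ι → (sigmaM ι p q ↔ p.2 = q.2)) ∧
    (∀ p q : Elt X G, p ∈ Mset ι → q ∈ Mset ι →
      mulM p p = p → nleM p q → mulM q q = q) :=
  ⟨fun _ _ hp hq ↦ mulM_mem_Mset hp hq,
    fun p q r _ _ _ ↦ mulM_assoc p q r,
    fun _ hp ↦ ⟨gammaOne_mulM (one_mem_of_mem_XY hp.1), mulM_gammaOne hp.2⟩,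
    fun p hp ↦ ⟨invM_mem_Mset hp, mulM_invM_mulM p, invM_mulM_invM p⟩,
    fun _ _ _ _ hp hq ↦ mulM_comm_of_idempotent hp hq,
    fun p q _ _ ↦ nleM_iff p q,
    fun _ _ hp hq ↦ sigmaM_iff hp hq,
    fun _ _ _ _ hp hpq ↦ mulM_self_of_nleM hp hpq⟩

/-- `M(G,Y)` is an `E`-unitary inverse monoid: the
multiplication `((A,g),(B,h)) ↦ (A ∪ gB, gh)` is well defined and associative,
`(Γ_1, 1)` is a two-sided identity, `(A,g)⁻¹ = (g⁻¹A, g⁻¹)` gives inverses,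
idempotents commute, the natural partial order is `(A,g) ≤ (B,h)` iff `g = h`
and `B ⊆ A`, two elements are `σ`-related iff their group components coincide,
and `M(G,Y)` is `E`-unitary. -/
theorem MGY_EUnitary_inverseMonoid {X G : Type*} [Nonempty X] [Group G] (ι : X → G)
    (hgen : Subgroup.closure (Set.range ι) = ⊤) :
    -- well-definedness of the multiplication
    (∀ p q : Elt X G, p ∈ Mset ι → q ∈ Mset ι →
      (mulM p q).1 ∈ XY ι ∧ (mulM p q).2 ∈ (mulM p q).1.1) ∧
    -- associativity
    (∀ p q r : Elt X G, p ∈ Mset ι → q ∈ Mset ι → r ∈ Mset ι →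
      mulM (mulM p q) r = mulM p (mulM q r)) ∧
    -- `(Γ_1, 1)` is a two-sided identity
    (∀ p : Elt X G, p ∈ Mset ι →
      mulM ((gammaOne, 1) : Elt X G) p = p ∧ mulM p ((gammaOne, 1) : Elt X G) = p) ∧
    -- inverses
    (∀ p : Elt X G, p ∈ Mset ι → invM p ∈ Mset ι ∧
      mulM (mulM p (invM p)) p = p ∧ mulM (mulM (invM p) p) (invM p) = invM p) ∧
    -- idempotents commute
    (∀ p q : Elt X G, p ∈ Mset ι → q ∈ Mset ι →
      mulM p p = p → mulM q q = q → mulM p q = mulM q p) ∧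
    -- the natural partial order
    (∀ p q : Elt X G, p ∈ Mset ι → q ∈ Mset ι →
      (nleM p q ↔ p.2 = q.2 ∧ gsub q.1 p.1)) ∧
    -- the minimum group congruence
    (∀ p q : Elt X G, p ∈ Mset ι → q ∈ Mset ι → (sigmaM ι p q ↔ p.2 = q.2)) ∧
    -- `E`-unitarity
    (∀ p q : Elt X G, p ∈ Mset ι → q ∈ Mset ι →
      mulM p p = p → nleM p q → mulM q q = q) :=
  MGY_EUnitary_inverseMonoid_general ι

end FInvPaper
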